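/- (Per-step expected descent inequality in the proof of Theorem 1.) Let E be a real Hilbert space and L : E → ℝ a differentiable function whose gradient ∇L is Lipschitz continuous with constant L_s > 0. Let η be a step size with 0 < η ≤ 1/(4 L_s). Let (Ω, μ) be a probability space and G : Ω → E a Bochner-integrable random vector with mean ḡ = ∫_Ω G dμ and ∫_Ω ‖G(ω)‖² dμ(ω) < ∞. Fix W ∈ E and suppose ‖ḡ − ∇L(W)‖ ≤ δ and ∫_Ω ‖G(ω) − ḡ‖² dμ(ω) ≤ σ² for reals δ, σ ≥ 0. Then ∫_Ω L(W − η G(ω)) dμ(ω) ≤ L(W) − (η/4)‖∇L(W)‖² + (3η/4)δ² + (L_s η² σ²)/2. -/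

import Mathlib

open MeasureTheory

/-!
The quadratic upper bound `L (x + v) ≤ L x + ⟪∇L x, v⟫ + (Ls / 2) ‖v‖²` for functions with
`Ls`-Lipschitz gradient (`descent_bound`) is applied with `v = -η G ω` and integrated. The
bias-variance identity (`integral_norm_sq_eq`) gives
`𝔼 L(W - η G) ≤ L W - η ⟪∇L W, ḡ⟫ + (Ls η² / 2) (‖ḡ‖² + 𝔼 ‖G - ḡ‖²)`.
Writing `ḡ = ∇L W + e` with `‖e‖ ≤ δ` and using `Ls η ≤ 1/4`, the terms in `∇L W` and `e` are at
most `η (-7/8 ‖∇L W‖² - 3/4 ⟪∇L W, e⟫ + 1/8 ‖e‖²) ≤ -(η/2) ‖∇L W‖² + (η/2) δ²`.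
-/

/-- Quadratic upper bound for a function with Lipschitz gradient, obtained by comparing the
derivatives of both sides along the segment from `x` to `x + v`. -/
theorem descent_bound
    {E : Type*} [NormedAddCommGroup E] [InnerProductSpace ℝ E] [CompleteSpace E]
    (L : E → ℝ) (Ls : ℝ) (hdiff : Differentiable ℝ L)
    (hLip : ∀ x y : E, ‖gradient L x - gradient L y‖ ≤ Ls * ‖x - y‖) (x v : E) :
    L (x + v) ≤ L x + inner ℝ (gradient L x) v + Ls / 2 * ‖v‖ ^ 2 := by
  have hf : ∀ t : ℝ, HasDerivAt (fun t : ℝ => L (x + t • v))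
      (inner ℝ (gradient L (x + t • v)) v) t := by
    intro t
    have h1 : HasDerivAt (fun t : ℝ => x + t • v) v t := by
      simpa using ((hasDerivAt_id t).smul_const v).const_add x
    have h2 := (hdiff (x + t • v)).hasGradientAt.hasFDerivAt.comp_hasDerivAt t h1
    simpa [Function.comp_def] using h2
  have hB : ∀ t : ℝ, HasDerivAt
      (fun t : ℝ => L x + t * inner ℝ (gradient L x) v + Ls / 2 * ‖v‖ ^ 2 * t ^ 2)
      (inner ℝ (gradient L x) v + Ls * ‖v‖ ^ 2 * t) t := by
    intro t
    have h := (((hasDerivAt_id t).mul_const (inner ℝ (gradient L x) v)).const_add (L x)).add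
      (((hasDerivAt_id t).pow 2).const_mul (Ls / 2 * ‖v‖ ^ 2))
    refine h.congr_deriv ?_
    simp
    ring
  have key := image_le_of_deriv_right_le_deriv_boundary (a := 0) (b := 1)
    (fun t _ => (hf t).continuousAt.continuousWithinAt) (fun t _ => (hf t).hasDerivWithinAt)
    (by simp) (fun t _ => (hB t).continuousAt.continuousWithinAt)
    (fun t _ => (hB t).hasDerivWithinAt)
    (fun t ht => by
      have h1 := real_inner_le_norm (gradient L (x + t • v) - gradient L x) v
      have h2 := hLip (x + t • v) x
      rw [add_sub_cancel_left, norm_smul, Real.norm_of_nonneg ht.1] at h2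
      rw [inner_sub_left] at h1
      have h3 := mul_le_mul_of_nonneg_right h2 (norm_nonneg v)
      nlinarith)
    (Set.right_mem_Icc.mpr zero_le_one)
  simpa using key

/-- Bias-variance decomposition of the second moment. -/
theorem integral_norm_sq_eq
    {E : Type*} [NormedAddCommGroup E] [InnerProductSpace ℝ E] [CompleteSpace E]
    {Ω : Type*} [MeasurableSpace Ω] (μ : Measure Ω) [IsProbabilityMeasure μ]
    (G : Ω → E) (hG : Integrable G μ) (hG2 : Integrable (fun ω => ‖G ω‖ ^ 2) μ) :
    ∫ ω, ‖G ω‖ ^ 2 ∂μ = ‖∫ ω, G ω ∂μ‖ ^ 2 + ∫ ω, ‖G ω - ∫ ω', G ω' ∂μ‖ ^ 2 ∂μ := by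
  set m := ∫ ω, G ω ∂μ with hm
  have hi : Integrable (fun ω => 2 * inner ℝ m (G ω)) μ := (hG.const_inner m).const_mul 2
  have hs : Integrable (fun ω => ‖G ω‖ ^ 2 - 2 * inner ℝ m (G ω)) μ := hG2.sub hi
  have e : ∀ ω, ‖G ω - m‖ ^ 2 = ‖G ω‖ ^ 2 - 2 * inner ℝ m (G ω) + ‖m‖ ^ 2 := fun ω => by
    rw [norm_sub_sq_real, real_inner_comm]
  simp_rw [e]
  rw [integral_add hs (integrable_const _), integral_sub hG2 hi, integral_const_mul,
    integral_inner hG, ← hm, real_inner_self_eq_norm_sq]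
  simp
  ring

theorem per_step_expected_descent
    {E : Type*} [NormedAddCommGroup E] [InnerProductSpace ℝ E] [CompleteSpace E]
    (L : E → ℝ) (Ls : ℝ) (hLs : 0 < Ls)
    (hdiff : Differentiable ℝ L)
    (hLip : ∀ x y : E, ‖gradient L x - gradient L y‖ ≤ Ls * ‖x - y‖)
    (η : ℝ) (hη : 0 < η) (hη' : η ≤ 1 / (4 * Ls))
    {Ω : Type*} [MeasurableSpace Ω] (μ : Measure Ω) [IsProbabilityMeasure μ]
    (G : Ω → E) (hG : Integrable G μ)
    (hG2 : Integrable (fun ω => ‖G ω‖ ^ 2) μ)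
    (W : E) (δ σ : ℝ) (hδ : 0 ≤ δ) (hσ : 0 ≤ σ)
    (hbias : ‖(∫ ω, G ω ∂μ) - gradient L W‖ ≤ δ)
    (hvar : ∫ ω, ‖G ω - ∫ ω', G ω' ∂μ‖ ^ 2 ∂μ ≤ σ ^ 2)
    (hLint : Integrable (fun ω => L (W - η • G ω)) μ) :
    ∫ ω, L (W - η • G ω) ∂μ ≤
      L W - (η / 4) * ‖gradient L W‖ ^ 2 + (3 * η / 4) * δ ^ 2
        + Ls * η ^ 2 * σ ^ 2 / 2 := by
  have hvar_eq := integral_norm_sq_eq μ G hG hG2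
  have hpt : ∀ ω, L (W - η • G ω) ≤
      L W - η * inner ℝ (gradient L W) (G ω) + Ls / 2 * η ^ 2 * ‖G ω‖ ^ 2 := by
    intro ω
    have h := descent_bound L Ls hdiff hLip W (-(η • G ω))
    rw [← sub_eq_add_neg, inner_neg_right, inner_smul_right, norm_neg, norm_smul, mul_pow,
      Real.norm_eq_abs, sq_abs] at h
    linarith
  have hi1 : Integrable (fun ω => η * inner ℝ (gradient L W) (G ω)) μ :=
    (hG.const_inner _).const_mul η
  have hi0 : Integrable (fun ω => L W - η * inner ℝ (gradient L W) (G ω)) μ :=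
    (integrable_const _).sub hi1
  have hi2 : Integrable (fun ω => Ls / 2 * η ^ 2 * ‖G ω‖ ^ 2) μ := hG2.const_mul _
  have hint := integral_mono hLint (hi0.add hi2) hpt
  simp only [Pi.add_apply] at hint
  rw [integral_add hi0 hi2, integral_sub (integrable_const _) hi1, integral_const_mul,
    integral_const_mul, integral_inner hG, hvar_eq] at hint
  simp only [integral_const, probReal_univ, one_smul] at hint
  set m := ∫ ω, G ω ∂μ
  set g := gradient L W
  obtain ⟨e, he⟩ : ∃ e, e = m - g := ⟨_, rfl⟩
  have hme : m = g + e := by rw [he]; abel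
  have hinner : inner ℝ g m = ‖g‖ ^ 2 + inner ℝ g e := by
    rw [hme, inner_add_right, real_inner_self_eq_norm_sq]
  have hnorm : ‖m‖ ^ 2 = ‖g‖ ^ 2 + 2 * inner ℝ g e + ‖e‖ ^ 2 := by
    rw [hme, norm_add_sq_real]
  have hed : ‖e‖ ^ 2 ≤ δ ^ 2 := by
    rw [he]
    exact pow_le_pow_left₀ (norm_nonneg _) hbias 2
  have hstep : Ls / 2 * η ^ 2 ≤ η / 8 := by
    rw [le_div_iff₀ (by positivity)] at hη'
    nlinarith
  -- Young's inequality, in the form `0 ≤ ‖g + e‖²`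
  have hyoung : 0 ≤ ‖g‖ ^ 2 + 2 * inner ℝ g e + ‖e‖ ^ 2 := hnorm ▸ sq_nonneg _
  have h1 := mul_le_mul_of_nonneg_right hstep (sq_nonneg ‖m‖)
  have h2 := mul_le_mul_of_nonneg_left hvar (show 0 ≤ Ls / 2 * η ^ 2 by positivity)
  have h3 := mul_nonneg hη.le hyoung
  have h4 := mul_le_mul_of_nonneg_left hed hη.le
  have h5 := mul_nonneg hη.le (sq_nonneg ‖g‖)
  have h6 := mul_nonneg hη.le (sq_nonneg δ)
  rw [hnorm] at h1 hint
  rw [hinner] at hint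
  nlinarith
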